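/- (Sign changes and their contribution under perturbation of a Gaussian layer.) There exist absolute constants C, c > 0 such that the following holds. Let δ₂ ∈ [0, C] and δ_∞ ∈ [0, 1/(4√m)], and let W⁰ ∈ ℝ^{m×m} be a random matrix with i.i.d. N(0, 2/m) entries. For every fixed unit vector h⁰ ∈ ℝ^m, with probability at least 1 − e^{−c·m^{3/2}·δ_∞} over W⁰, the following holds for all g' ∈ ℝ^m that can be written as g' = g'_1 + g'_2 with ‖g'_1‖ ≤ δ₂ and ‖g'_2‖_∞ ≤ δ_∞: letting D' ∈ ℝ^{m×m} be the diagonal matrix with (D')_{kk} = 1[(W⁰h⁰ + g')_k ≥ 0] − 1[(W⁰h⁰)_k ≥ 0], and x = D'(W⁰h⁰ + g') ∈ ℝ^m, one has ‖x‖₀ ≤ ‖D'‖₀ ≤ C·(m·δ₂^{2/3} + δ_∞·m^{3/2}) and ‖x‖ ≤ C·(δ₂ + δ_∞^{3/2}·m^{3/4}). -/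

import Mathlib

/-!
A coordinate `k` can change sign only if `|(W⁰h⁰)_k| ≤ |g'_k|`. Put `s = δ₂^{2/3} / √m`. Then either
`|g'₁,k| > s`, which by Chebyshev happens for at most `δ₂² / s² = m δ₂^{2/3}` coordinates, or
`|(W⁰h⁰)_k| ≤ s + δ_∞`. The coordinates of `W⁰h⁰` are independent `N(0, 2/m)` variables, so each is
that small with probability at most `√m (s + δ_∞)`, and by a Chernoff bound the number of small ones
is at most `3B` outside an event of probability at most `exp (-B)`, where
`B = m δ₂^{2/3} + δ_∞ m^{3/2}`. This gives at most `4B` sign changes, uniformly in `g'`.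

At a sign change the new value is also at most `|g'_k|` in absolute value, hence
`‖x‖² ≤ 2 ‖g'₁‖² + 2 δ_∞² · 4B`, and Young's inequality bounds the mixed term
`m δ_∞² δ₂^{2/3}` by `δ₂² + δ_∞³ m^{3/2}`.
-/

open MeasureTheory ProbabilityTheory

noncomputable section

namespace DNNPaper

/-! ### Elementary linear algebra on plain function matrices -/

def mulVec {p q : ℕ} (M : Fin p → Fin q → ℝ) (v : Fin q → ℝ) : Fin p → ℝ :=
  fun i => ∑ j, M i j * v j

def mmul {p q r : ℕ} (M : Fin p → Fin q → ℝ) (N : Fin q → Fin r → ℝ) :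
    Fin p → Fin r → ℝ :=
  fun i k => ∑ j, M i j * N j k

def transpose {p q : ℕ} (M : Fin p → Fin q → ℝ) : Fin q → Fin p → ℝ :=
  fun j i => M i j

def dot {p : ℕ} (u v : Fin p → ℝ) : ℝ := ∑ i, u i * v i

def outer {p q : ℕ} (u : Fin p → ℝ) (v : Fin q → ℝ) : Fin p → Fin q → ℝ :=
  fun i j => u i * v j

def idMat (p : ℕ) : Fin p → Fin p → ℝ := fun i j => if i = j then 1 else 0

def diagMat {p : ℕ} (dg : Fin p → ℝ) : Fin p → Fin p → ℝ :=
  fun i j => if i = j then dg i else 0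

def relu {p : ℕ} (v : Fin p → ℝ) : Fin p → ℝ := fun k => max (v k) 0

/-- diagonal entries of the ReLU sign matrix of a pre-activation vector -/
def signOf {p : ℕ} (g : Fin p → ℝ) : Fin p → ℝ := fun k => if 0 ≤ g k then 1 else 0

/-- Euclidean norm -/
def l2 {p : ℕ} (v : Fin p → ℝ) : ℝ := Real.sqrt (∑ k, v k ^ 2)

/-- max-norm -/
def linf {p : ℕ} (v : Fin p → ℝ) : ℝ := ⨆ k, |v k|

/-- number of nonzero entries -/
def l0 {p : ℕ} (v : Fin p → ℝ) : ℕ := (Finset.univ.filter fun k => v k ≠ 0).card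

/-- Frobenius norm -/
def frob {p q : ℕ} (M : Fin p → Fin q → ℝ) : ℝ := Real.sqrt (∑ i, ∑ j, M i j ^ 2)

/-- spectral norm (ℓ₂ operator norm) -/
def spec {p q : ℕ} (M : Fin p → Fin q → ℝ) : ℝ :=
  sSup {r | ∃ v : Fin q → ℝ, l2 v ≤ 1 ∧ r = l2 (mulVec M v)}

/-- trace (Frobenius) inner product -/
def innerF {p q : ℕ} (M N : Fin p → Fin q → ℝ) : ℝ := ∑ i, ∑ j, M i j * N i j

/-- `‖W‖₂ = max_ℓ ‖W_ℓ‖₂` for a tuple of matrices -/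
def tupleSpec {m L : ℕ} (W : Fin L → Fin m → Fin m → ℝ) : ℝ := ⨆ ℓ, spec (W ℓ)

/-! ### The network -/

variable {𝔡 m d L : ℕ}

/-- `Wat W ℓ` is the weight matrix of layer `ℓ ∈ {1,…,L}` (identity outside this range). -/
def Wat (W : Fin L → Fin m → Fin m → ℝ) (ℓ : ℕ) : Fin m → Fin m → ℝ :=
  if h : 1 ≤ ℓ ∧ ℓ ≤ L then W ⟨ℓ - 1, by omega⟩ else idMat m

/-- the forward (post-activation) vectors `h_ℓ`, `ℓ = 0,1,…,L` -/
def hseq (A : Fin m → Fin 𝔡 → ℝ) (W : Fin L → Fin m → Fin m → ℝ) (x : Fin 𝔡 → ℝ) :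
    ℕ → Fin m → ℝ
  | 0 => relu (mulVec A x)
  | ℓ + 1 =>
      if ℓ + 1 ≤ L then relu (mulVec (Wat W (ℓ + 1)) (hseq A W x ℓ)) else hseq A W x ℓ

/-- the pre-activation vectors `g_ℓ`, `ℓ = 0,1,…,L` -/
def gseq (A : Fin m → Fin 𝔡 → ℝ) (W : Fin L → Fin m → Fin m → ℝ) (x : Fin 𝔡 → ℝ) :
    ℕ → Fin m → ℝ
  | 0 => mulVec A x
  | ℓ + 1 => mulVec (Wat W (ℓ + 1)) (hseq A W x ℓ)

/-- `chainProd W Dfun a b = (D_b W_b) (D_{b-1} W_{b-1}) ⋯ (D_a W_a)` where `D_ℓ` is the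
diagonal matrix with entries `Dfun ℓ`; it is the identity when `b < a`, and factors with
index outside `{1,…,L}` are skipped. -/
def chainProd (W : Fin L → Fin m → Fin m → ℝ) (Dfun : ℕ → Fin m → ℝ) (a : ℕ) :
    ℕ → Fin m → Fin m → ℝ
  | 0 => idMat m
  | b + 1 =>
      if a ≤ b + 1 ∧ b + 1 ≤ L then
        mmul (mmul (diagMat (Dfun (b + 1))) (Wat W (b + 1))) (chainProd W Dfun a b)
      else chainProd W Dfun a b

/-- `prodDW A W x a b = D_b W_b D_{b-1} W_{b-1} ⋯ D_a W_a` with the sign matrices of input `x` -/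
def prodDW (A : Fin m → Fin 𝔡 → ℝ) (W : Fin L → Fin m → Fin m → ℝ) (x : Fin 𝔡 → ℝ)
    (a b : ℕ) : Fin m → Fin m → ℝ :=
  chainProd W (fun ℓ => signOf (gseq A W x ℓ)) a b

/-- `Back_ℓ = B D_L W_L ⋯ D_ℓ W_ℓ` (equal to `B` for `ℓ = L+1`) -/
def backMat (B : Fin d → Fin m → ℝ) (A : Fin m → Fin 𝔡 → ℝ)
    (W : Fin L → Fin m → Fin m → ℝ) (x : Fin 𝔡 → ℝ) (ℓ : ℕ) : Fin d → Fin m → ℝ :=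
  mmul B (prodDW A W x ℓ L)

/-- formula gradient w.r.t. `W_ℓ` with an arbitrary (fake) loss vector `v`:
`D_ℓ (Back_{ℓ+1}ᵀ v) h_{ℓ-1}ᵀ` -/
def gradW (B : Fin d → Fin m → ℝ) (A : Fin m → Fin 𝔡 → ℝ)
    (W : Fin L → Fin m → Fin m → ℝ) (x : Fin 𝔡 → ℝ) (v : Fin d → ℝ) (ℓ : ℕ) :
    Fin m → Fin m → ℝ :=
  outer (mulVec (diagMat (signOf (gseq A W x ℓ)))
      (mulVec (transpose (backMat B A W x (ℓ + 1))) v))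
    (hseq A W x (ℓ - 1))

/-- loss vector `B h_L − y` -/
def lossVec (B : Fin d → Fin m → ℝ) (A : Fin m → Fin 𝔡 → ℝ)
    (W : Fin L → Fin m → Fin m → ℝ) (x : Fin 𝔡 → ℝ) (y : Fin d → ℝ) : Fin d → ℝ :=
  fun j => mulVec B (hseq A W x L) j - y j

/-- per-sample ℓ₂ regression loss `F_i` -/
def objFi (B : Fin d → Fin m → ℝ) (A : Fin m → Fin 𝔡 → ℝ)
    (W : Fin L → Fin m → Fin m → ℝ) (x : Fin 𝔡 → ℝ) (y : Fin d → ℝ) : ℝ :=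
  (1 / 2) * l2 (lossVec B A W x y) ^ 2

/-- total objective `F` -/
def objF {n : ℕ} (B : Fin d → Fin m → ℝ) (A : Fin m → Fin 𝔡 → ℝ)
    (W : Fin L → Fin m → Fin m → ℝ) (x : Fin n → Fin 𝔡 → ℝ)
    (y : Fin n → Fin d → ℝ) : ℝ :=
  ∑ i, objFi B A W (x i) (y i)

/-- formula gradient of the total objective w.r.t. `W_ℓ` -/
def gradF {n : ℕ} (B : Fin d → Fin m → ℝ) (A : Fin m → Fin 𝔡 → ℝ)
    (W : Fin L → Fin m → Fin m → ℝ) (x : Fin n → Fin 𝔡 → ℝ)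
    (y : Fin n → Fin d → ℝ) (ℓ : ℕ) : Fin m → Fin m → ℝ :=
  ∑ i, gradW B A W (x i) (lossVec B A W (x i) (y i)) ℓ

/-! ### Random initialization -/

/-- a `p × q` random matrix with i.i.d. `N(0, v)` entries -/
def gaussMat (p q : ℕ) (v : NNReal) : Measure (Fin p → Fin q → ℝ) :=
  Measure.pi fun _ => Measure.pi fun _ => gaussianReal 0 v

/-- joint law of `(A, W)` at random initialization -/
def initAW (𝔡 m L : ℕ) :
    Measure ((Fin m → Fin 𝔡 → ℝ) × (Fin L → Fin m → Fin m → ℝ)) :=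
  (gaussMat m 𝔡 (2 / m)).prod (Measure.pi fun _ : Fin L => gaussMat m m (2 / m))

/-- joint law of `(A, W, B)` at random initialization -/
def initMeasure (𝔡 m d L : ℕ) :
    Measure ((Fin m → Fin 𝔡 → ℝ) ×
      (Fin L → Fin m → Fin m → ℝ) × (Fin d → Fin m → ℝ)) :=
  (gaussMat m 𝔡 (2 / m)).prod
    ((Measure.pi fun _ : Fin L => gaussMat m m (2 / m)).prod (gaussMat d m (1 / d)))

section Chernoff

variable {ι Ω : Type*} [Fintype ι] [MeasurableSpace Ω] {P : Measure Ω} {A : ι → Set Ω}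

lemma mgf_indicator_one [IsProbabilityMeasure P] {S : Set Ω} (hS : MeasurableSet S) (t : ℝ) :
    mgf (S.indicator 1) P t = 1 + P.real S * (Real.exp t - 1) := by
  have h_exp : (fun ω => Real.exp (t * S.indicator 1 ω)) =
      fun ω => 1 + S.indicator (fun _ => Real.exp t - 1) ω := by
    ext ω
    by_cases hω : ω ∈ S <;> simp [hω]
  rw [mgf, h_exp, integral_add (integrable_const _) ((integrable_const _).indicator hS),
    integral_indicator_const _ hS]
  simp

lemma mgf_sum_indicator_one_le (hA : ∀ i, MeasurableSet (A i)) (h_indep : iIndepSet A P) (t : ℝ) :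
    mgf (∑ i, (A i).indicator 1) P t ≤ Real.exp ((Real.exp t - 1) * ∑ i, P.real (A i)) := by
  have := h_indep.isProbabilityMeasure
  calc
    mgf (∑ i, (A i).indicator 1) P t = ∏ i, mgf ((A i).indicator 1) P t :=
      h_indep.iIndepFun_indicator.mgf_sum (fun i => measurable_one.indicator (hA i)) _
    _ ≤ ∏ i, Real.exp (P.real (A i) * (Real.exp t - 1)) := by
      refine Finset.prod_le_prod (fun i _ => mgf_nonneg) fun i _ => ?_
      rw [mgf_indicator_one (hA i), add_comm]
      exact Real.add_one_le_exp _
    _ = Real.exp ((Real.exp t - 1) * ∑ i, P.real (A i)) := by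
      rw [← Real.exp_sum, ← Finset.sum_mul, mul_comm]

lemma measureReal_le_sum_indicator_one_le_exp (hA : ∀ i, MeasurableSet (A i))
    (h_indep : iIndepSet A P) {t : ℝ} (ht : 0 ≤ t) (a : ℝ) :
    P.real {ω | a ≤ (∑ i, (A i).indicator 1) ω} ≤
      Real.exp ((Real.exp t - 1) * ∑ i, P.real (A i) - t * a) := by
  have := h_indep.isProbabilityMeasure
  have h_meas (i : ι) : Measurable ((A i).indicator (1 : Ω → ℝ)) := measurable_one.indicator (hA i)
  have h_int : Integrable (fun ω => Real.exp (t * (∑ i, (A i).indicator 1) ω)) P :=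
    h_indep.iIndepFun_indicator.integrable_exp_mul_sum h_meas fun i _ =>
      integrable_exp_mul_of_mem_Icc (a := 0) (b := 1) (h_meas i).aemeasurable <|
        .of_forall fun ω => by by_cases hω : ω ∈ A i <;> simp [hω]
  calc
    P.real {ω | a ≤ (∑ i, (A i).indicator 1) ω} ≤
        Real.exp (-t * a) * mgf (∑ i, (A i).indicator 1) P t := measure_ge_le_exp_mul_mgf a ht h_int
    _ ≤ Real.exp (-t * a) * Real.exp ((Real.exp t - 1) * ∑ i, P.real (A i)) := by
      gcongr
      exact mgf_sum_indicator_one_le hA h_indep t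
    _ = Real.exp ((Real.exp t - 1) * ∑ i, P.real (A i) - t * a) := by
      rw [← Real.exp_add]
      ring_nf

lemma one_sub_exp_neg_le_measureReal_sum_indicator_one_le (hA : ∀ i, MeasurableSet (A i))
    (h_indep : iIndepSet A P) {B : ℝ} (hB : ∑ i, P.real (A i) ≤ B) :
    1 - Real.exp (-B) ≤ P.real {ω | (∑ i, (A i).indicator 1) ω ≤ 3 * B} := by
  have := h_indep.isProbabilityMeasure
  have h_tail : P.real {ω | (∑ i, (A i).indicator 1) ω ≤ 3 * B}ᶜ ≤ Real.exp (-B) := by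
    have h_sum : 0 ≤ ∑ i, P.real (A i) := Finset.sum_nonneg fun _ _ => measureReal_nonneg
    calc
      P.real {ω | (∑ i, (A i).indicator 1) ω ≤ 3 * B}ᶜ ≤
          P.real {ω | 3 * B ≤ (∑ i, (A i).indicator 1) ω} := by
        simp only [Set.compl_ofPred, not_le]
        exact measureReal_mono (Set.ofPred_subset_ofPred.mpr fun _ => le_of_lt)
      _ ≤ Real.exp ((Real.exp 1 - 1) * ∑ i, P.real (A i) - 1 * (3 * B)) :=
        measureReal_le_sum_indicator_one_le_exp hA h_indep zero_le_one _
      _ ≤ Real.exp (-B) := by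
        gcongr
        nlinarith [Real.exp_one_lt_three]
  have h_univ := measureReal_union_le (μ := P) {ω | (∑ i, (A i).indicator 1) ω ≤ 3 * B}
    {ω | (∑ i, (A i).indicator 1) ω ≤ 3 * B}ᶜ
  rw [Set.union_compl_self, probReal_univ] at h_univ
  linarith

end Chernoff

section Gaussian

lemma map_sum_pi_gaussianReal {ι : Type*} [Fintype ι] (μ : ι → ℝ) (v : ι → NNReal) :
    (Measure.pi fun i => gaussianReal (μ i) (v i)).map (fun x => ∑ i, x i) =
      gaussianReal (∑ i, μ i) (∑ i, v i) := by
  have : IsProbabilityMeasure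
      ((Measure.pi fun i => gaussianReal (μ i) (v i)).map (fun x => ∑ i, x i)) :=
    Measure.isProbabilityMeasure_map (by fun_prop)
  refine Measure.ext_of_charFun (funext fun t => ?_)
  simp only [charFun_map_sum_pi_eq_prod, Finset.prod_apply, charFun_gaussianReal,
    ← Complex.exp_sum, Finset.sum_sub_distrib, ← Finset.sum_mul, ← Finset.mul_sum,
    ← Finset.sum_div, Complex.ofReal_sum, NNReal.coe_sum]

lemma map_sum_mul_pi_gaussianReal {ι : Type*} [Fintype ι] (v : NNReal) (h : ι → ℝ) :
    (Measure.pi fun _ : ι => gaussianReal 0 v).map (fun w => ∑ j, w j * h j) =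
      gaussianReal 0 ((∑ j, h j ^ 2).toNNReal * v) := by
  have h_scale : (Measure.pi fun _ : ι => gaussianReal 0 v).map (fun w j => w j * h j) =
      Measure.pi fun j => gaussianReal 0 ((h j ^ 2).toNNReal * v) := by
    have (j : ι) : (gaussianReal 0 v).map (· * h j) = gaussianReal 0 ((h j ^ 2).toNNReal * v) := by
      rw [gaussianReal_map_mul_const, mul_zero, Real.toNNReal_of_nonneg (sq_nonneg _)]
    rw [Measure.pi_map_pi fun j => (measurable_mul_const (h j)).aemeasurable]
    simp_rw [this]
  calc
    _ = ((Measure.pi fun _ : ι => gaussianReal 0 v).map (fun w j => w j * h j)).map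
        (fun x => ∑ j, x j) := (Measure.map_map (by fun_prop) (by fun_prop)).symm
    _ = gaussianReal 0 ((∑ j, h j ^ 2).toNNReal * v) := by
      rw [h_scale, map_sum_pi_gaussianReal, Finset.sum_const_zero, ← Finset.sum_mul,
        Real.toNNReal_sum_of_nonneg fun j _ => sq_nonneg (h j)]

lemma gaussianPDFReal_le (μ : ℝ) (v : NNReal) (x : ℝ) :
    gaussianPDFReal μ v x ≤ (√(2 * Real.pi * v))⁻¹ := by
  rw [gaussianPDFReal]
  refine mul_le_of_le_one_right (by positivity) (Real.exp_le_one_iff.mpr ?_)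
  rw [neg_div]
  exact neg_nonpos.mpr (by positivity)

lemma gaussianReal_real_closedBall_le (μ : ℝ) {v : NNReal} (hv : v ≠ 0) (c : ℝ) {t : ℝ}
    (ht : 0 ≤ t) :
    (gaussianReal μ v).real (Metric.closedBall c t) ≤ 2 * t / √(2 * Real.pi * v) := by
  rw [measureReal_def, gaussianReal_apply_eq_integral μ hv,
    ENNReal.toReal_ofReal (integral_nonneg fun x => gaussianPDFReal_nonneg μ v x)]
  calc
    ∫ x in Metric.closedBall c t, gaussianPDFReal μ v x ≤
        ∫ _ in Metric.closedBall c t, (√(2 * Real.pi * v))⁻¹ :=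
      integral_mono (integrable_gaussianPDFReal μ v).integrableOn
        (integrableOn_const measure_closedBall_lt_top.ne) (gaussianPDFReal_le μ v)
    _ = 2 * t / √(2 * Real.pi * v) := by
      rw [setIntegral_const, measureReal_def, Real.volume_closedBall,
        ENNReal.toReal_ofReal (by positivity), smul_eq_mul, div_eq_mul_inv]

end Gaussian

section Norms

variable {p : ℕ}

lemma sq_l2 (v : Fin p → ℝ) : l2 v ^ 2 = ∑ k, v k ^ 2 :=
  Real.sq_sqrt (Finset.sum_nonneg fun _ _ => sq_nonneg _)

lemma l2_nonneg (v : Fin p → ℝ) : 0 ≤ l2 v := Real.sqrt_nonneg _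

lemma abs_le_linf (v : Fin p → ℝ) (k : Fin p) : |v k| ≤ linf v :=
  le_ciSup (f := fun k => |v k|) (Set.finite_range _).bddAbove k

lemma l0_mul_le (v w : Fin p → ℝ) : l0 (fun k => v k * w k) ≤ l0 v :=
  Finset.card_le_card <| Finset.monotone_filter_right _ fun _ _ => left_ne_zero_of_mul

lemma card_lt_abs_mul_sq_le_sq_l2 {s : ℝ} (hs : 0 ≤ s) (v : Fin p → ℝ) :
    (Finset.univ.filter fun k => s < |v k|).card * s ^ 2 ≤ l2 v ^ 2 := by
  calc
    (Finset.univ.filter fun k => s < |v k|).card * s ^ 2 =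
        ∑ k with s < |v k|, s ^ 2 := by rw [Finset.sum_const, nsmul_eq_mul]
    _ ≤ ∑ k with s < |v k|, v k ^ 2 := by
      refine Finset.sum_le_sum fun k hk => ?_
      rw [← sq_abs (v k)]
      exact pow_le_pow_left₀ hs (Finset.mem_filter.mp hk).2.le 2
    _ ≤ ∑ k, v k ^ 2 :=
      Finset.sum_le_sum_of_subset_of_nonneg (Finset.filter_subset _ _) fun _ _ _ => sq_nonneg _
    _ = l2 v ^ 2 := (sq_l2 v).symm

end Norms

section GaussianLayer

variable {p q : ℕ} (v : NNReal) (h : Fin q → ℝ)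

lemma measurable_mulVec_apply (k : Fin p) :
    Measurable fun W : Fin p → Fin q → ℝ => mulVec W h k := by
  unfold mulVec
  fun_prop

lemma map_mulVec_apply_gaussMat (k : Fin p) :
    (gaussMat p q v).map (fun W => mulVec W h k) = gaussianReal 0 ((l2 h ^ 2).toNNReal * v) := by
  rw [sq_l2, ← map_sum_mul_pi_gaussianReal,
    ← (measurePreserving_eval (fun _ : Fin p => Measure.pi fun _ : Fin q => gaussianReal 0 v)
      k).map_eq, Measure.map_map (by fun_prop) (by fun_prop)]
  rfl

lemma iIndepFun_mulVec_gaussMat :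
    iIndepFun (fun (k : Fin p) (W : Fin p → Fin q → ℝ) => mulVec W h k) (gaussMat p q v) :=
  iIndepFun_pi (X := fun (_ : Fin p) (w : Fin q → ℝ) => ∑ j, w j * h j) fun _ =>
    Measurable.aemeasurable (by fun_prop)

lemma iIndepSet_abs_mulVec_le_gaussMat (t : ℝ) :
    iIndepSet (fun k : Fin p => {W | |mulVec W h k| ≤ t}) (gaussMat p q v) := by
  have h_meas : MeasurableSet {x : ℝ | |x| ≤ t} := measurableSet_le (by fun_prop) (by fun_prop)
  refine (iIndepSet_iff_meas_biInter fun k => measurable_mulVec_apply h k h_meas).mpr ?_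
  exact fun S => (iIndepFun_mulVec_gaussMat v h).measure_inter_preimage_eq_mul S fun _ _ => h_meas

lemma gaussMat_real_abs_mulVec_le {m : ℕ} (hm : 0 < m) {h : Fin q → ℝ} (hh : l2 h = 1)
    (k : Fin p) {t : ℝ} (ht : 0 ≤ t) :
    (gaussMat p q (2 / m)).real {W | |mulVec W h k| ≤ t} ≤ √m * t := by
  have h_ball : {W : Fin p → Fin q → ℝ | |mulVec W h k| ≤ t} =
      (fun W => mulVec W h k) ⁻¹' Metric.closedBall 0 t := by
    ext W
    simp [Real.norm_eq_abs]
  have h_const : 2 ≤ √(2 * Real.pi * (2 / m : NNReal)) * √m := by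
    rw [← Real.sqrt_mul (by positivity)]
    apply Real.le_sqrt_of_sq_le
    have : 2 * Real.pi * (2 / m : NNReal) * m = 4 * Real.pi := by
      push_cast
      field_simp
      norm_num
    linarith [Real.pi_gt_three]
  calc
    (gaussMat p q (2 / m)).real {W | |mulVec W h k| ≤ t} =
        (gaussianReal 0 (2 / m)).real (Metric.closedBall 0 t) := by
      rw [h_ball, ← map_measureReal_apply (measurable_mulVec_apply h k)
        Metric.isClosed_closedBall.measurableSet, map_mulVec_apply_gaussMat, hh, one_pow,
        Real.toNNReal_one, one_mul]
    _ ≤ 2 * t / √(2 * Real.pi * (2 / m : NNReal)) :=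
      gaussianReal_real_closedBall_le 0 (by positivity) 0 ht
    _ ≤ √m * t := by
      rw [div_le_iff₀ (by positivity)]
      nlinarith

end GaussianLayer

section SignChange

variable {p : ℕ} {u g g₁ g₂ : Fin p → ℝ} {d : ℝ} {k : Fin p}

/-- The diagonal of the matrix `D'` of the paper: the sign matrix of `u + g` minus that of `u`. -/
def signChange (u g : Fin p → ℝ) : Fin p → ℝ :=
  fun k => signOf (fun k' => u k' + g k') k - signOf u k

lemma sq_signChange_le_one (u g : Fin p → ℝ) (k : Fin p) : signChange u g k ^ 2 ≤ 1 := by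
  simp only [signChange, signOf]
  split_ifs <;> norm_num

lemma abs_le_of_signChange_ne_zero (hk : signChange u g k ≠ 0) :
    |u k| ≤ |g k| ∧ |u k + g k| ≤ |g k| := by
  simp only [signChange, signOf] at hk
  split_ifs at hk with h_new h_old h_old
  · simp at hk
  · rw [abs_of_neg (not_le.mp h_old), abs_of_nonneg h_new, abs_of_nonneg (by linarith)]
    constructor <;> linarith
  · rw [abs_of_nonneg h_old, abs_of_neg (not_le.mp h_new), abs_of_neg (by linarith)]
    constructor <;> linarith
  · simp at hk

lemma l0_signChange_add_le (hg₂ : ∀ k, |g₂ k| ≤ d) (s : ℝ) :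
    l0 (signChange u (g₁ + g₂)) ≤ (Finset.univ.filter fun k => |u k| ≤ s + d).card +
      (Finset.univ.filter fun k => s < |g₁ k|).card := by
  refine (Finset.card_le_card fun k hk => ?_).trans (Finset.card_union_le _ _)
  simp only [Finset.mem_union, Finset.mem_filter, Finset.mem_univ, true_and] at hk ⊢
  by_contra! h_none
  have h_le : |u k| ≤ |g₁ k + g₂ k| := (abs_le_of_signChange_ne_zero hk).1
  linarith [abs_add_le (g₁ k) (g₂ k), hg₂ k]

lemma sq_signChange_mul_add_le (hg₂ : |g₂ k| ≤ d) :
    (signChange u (g₁ + g₂) k * (u k + (g₁ + g₂) k)) ^ 2 ≤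
      2 * g₁ k ^ 2 + if signChange u (g₁ + g₂) k ≠ 0 then 2 * d ^ 2 else 0 := by
  split_ifs with hk
  · calc
      (signChange u (g₁ + g₂) k * (u k + (g₁ + g₂) k)) ^ 2 ≤ (u k + (g₁ + g₂) k) ^ 2 := by
        rw [mul_pow]
        exact mul_le_of_le_one_left (sq_nonneg _) (sq_signChange_le_one u _ k)
      _ ≤ (g₁ k + g₂ k) ^ 2 := sq_le_sq.mpr (abs_le_of_signChange_ne_zero hk).2
      _ ≤ 2 * (g₁ k ^ 2 + g₂ k ^ 2) := add_sq_le
      _ ≤ 2 * g₁ k ^ 2 + 2 * d ^ 2 := by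
        linarith [sq_le_sq.mpr (hg₂.trans (le_abs_self d))]
  · rw [not_not.mp hk, zero_mul, zero_pow two_ne_zero]
    positivity

lemma sq_l2_signChange_mul_add_le (hg₂ : ∀ k, |g₂ k| ≤ d) :
    l2 (fun k => signChange u (g₁ + g₂) k * (u k + (g₁ + g₂) k)) ^ 2 ≤
      2 * l2 g₁ ^ 2 + 2 * d ^ 2 * l0 (signChange u (g₁ + g₂)) := by
  rw [sq_l2, sq_l2]
  refine (Finset.sum_le_sum fun k _ => sq_signChange_mul_add_le (hg₂ k)).trans_eq ?_
  rw [Finset.sum_add_distrib, ← Finset.mul_sum, ← Finset.sum_filter, Finset.sum_const,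
    nsmul_eq_mul, l0, mul_comm (2 * d ^ 2)]

end SignChange

section Scales

variable {m n : ℕ} {δ₂ δinf : ℝ}

/-- The level `s = δ₂^{2/3} / √m` above which a coordinate of `g'₁` counts as large. It balances the
number `δ₂² / s²` of large coordinates against the expected number, of order `m^{3/2} s`, of
coordinates of `W⁰h⁰` in `[-s, s]`. -/
def largeLevel (m : ℕ) (δ₂ : ℝ) : ℝ := δ₂ ^ ((2 : ℝ) / 3) / √m

/-- The order of magnitude of the number of sign changes. -/
def signChangeScale (m : ℕ) (δ₂ δinf : ℝ) : ℝ :=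
  (m : ℝ) * δ₂ ^ ((2 : ℝ) / 3) + δinf * (m : ℝ) ^ ((3 : ℝ) / 2)

lemma rpow_two_thirds_pow_three {x : ℝ} (hx : 0 ≤ x) : (x ^ ((2 : ℝ) / 3)) ^ 3 = x ^ 2 := by
  rw [← Real.rpow_mul_natCast hx, ← Real.rpow_natCast x]
  norm_num

lemma rpow_three_halves_eq_sqrt_pow {x : ℝ} (hx : 0 ≤ x) : x ^ ((3 : ℝ) / 2) = √x ^ 3 := by
  rw [Real.sqrt_eq_rpow, ← Real.rpow_mul_natCast hx]
  norm_num

lemma rpow_three_quarters_sq {x : ℝ} (hx : 0 ≤ x) : (x ^ ((3 : ℝ) / 4)) ^ 2 = √x ^ 3 := by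
  rw [← rpow_three_halves_eq_sqrt_pow hx, ← Real.rpow_mul_natCast hx]
  norm_num

lemma sq_mul_le_pow_three_add_pow_three {x y : ℝ} (hx : 0 ≤ x) (hy : 0 ≤ y) :
    y ^ 2 * x ≤ x ^ 3 + y ^ 3 := by
  rcases le_total x y with hxy | hyx
  · nlinarith [mul_le_mul_of_nonneg_left hxy (sq_nonneg y), pow_nonneg hx 3]
  · nlinarith [mul_le_mul_of_nonneg_right (pow_le_pow_left₀ hy hyx 2) hx, pow_nonneg hy 3]

lemma largeLevel_nonneg (h₂ : 0 ≤ δ₂) : 0 ≤ largeLevel m δ₂ := by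
  unfold largeLevel
  positivity

lemma mul_sqrt_mul_largeLevel_add (hm : 0 < m) (δ₂ δinf : ℝ) :
    m * (√m * (largeLevel m δ₂ + δinf)) = signChangeScale m δ₂ δinf := by
  have h_sqrt : √(m : ℝ) ^ 2 = m := Real.sq_sqrt m.cast_nonneg
  rw [signChangeScale, largeLevel, rpow_three_halves_eq_sqrt_pow m.cast_nonneg]
  field_simp
  linear_combination -(√(m : ℝ) * δinf) * h_sqrt

lemma card_largeLevel_lt_le (hm : 0 < m) {g : Fin n → ℝ} (hg : l2 g ≤ δ₂) :
    (Finset.univ.filter fun k => largeLevel m δ₂ < |g k|).card ≤ m * δ₂ ^ ((2 : ℝ) / 3) := by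
  have h₂ : 0 ≤ δ₂ := (l2_nonneg g).trans hg
  rcases h₂.eq_or_lt with rfl | h_pos
  · have hz (k : Fin n) : g k = 0 := by
      have h_sum : ∑ k, g k ^ 2 = 0 := by
        rw [← sq_l2, le_antisymm hg (l2_nonneg g), zero_pow two_ne_zero]
      exact pow_eq_zero_iff two_ne_zero |>.mp <|
        (Finset.sum_eq_zero_iff_of_nonneg fun _ _ => sq_nonneg _).mp h_sum k (Finset.mem_univ k)
    simp [hz, largeLevel]
  · set x := δ₂ ^ ((2 : ℝ) / 3)
    have hx : 0 < x := by positivity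
    have h_level : largeLevel m δ₂ ^ 2 = x ^ 2 / m := by
      rw [largeLevel, div_pow, Real.sq_sqrt m.cast_nonneg]
    have h_count : (Finset.univ.filter fun k => largeLevel m δ₂ < |g k|).card * (x ^ 2 / m) ≤
        m * x * (x ^ 2 / m) := by
      calc
        _ ≤ l2 g ^ 2 := h_level ▸ card_lt_abs_mul_sq_le_sq_l2 (largeLevel_nonneg h₂) g
        _ ≤ δ₂ ^ 2 := pow_le_pow_left₀ (l2_nonneg g) hg 2
        _ = x ^ 3 := (rpow_two_thirds_pow_three h₂).symm
        _ = m * x * (x ^ 2 / m) := by field_simp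
    exact le_of_mul_le_mul_right h_count (by positivity)

lemma le_gaussMat_card_abs_mulVec_le (hm : 0 < m) (h₂ : 0 ≤ δ₂) (hinf : 0 ≤ δinf)
    {h : Fin n → ℝ} (hh : l2 h = 1) :
    ENNReal.ofReal (1 - Real.exp (-signChangeScale m δ₂ δinf)) ≤
      gaussMat m n (2 / m) {W | ((Finset.univ.filter fun k =>
        |mulVec W h k| ≤ largeLevel m δ₂ + δinf).card : ℝ) ≤ 3 * signChangeScale m δ₂ δinf} := by
  set A : Fin m → Set (Fin m → Fin n → ℝ) := fun k => {W | |mulVec W h k| ≤ largeLevel m δ₂ + δinf}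
  have h_count (W : Fin m → Fin n → ℝ) :
      ((Finset.univ.filter fun k => |mulVec W h k| ≤ largeLevel m δ₂ + δinf).card : ℝ) =
        (∑ k, (A k).indicator 1) W := by
    simp [A, Set.indicator_apply, Finset.sum_apply]
  have hA (k : Fin m) : MeasurableSet (A k) :=
    measurableSet_le (measurable_mulVec_apply h k).abs measurable_const
  have h_indep : iIndepSet A (gaussMat m n (2 / m)) := iIndepSet_abs_mulVec_le_gaussMat _ h _
  have h_mean : ∑ k, (gaussMat m n (2 / m)).real (A k) ≤ signChangeScale m δ₂ δinf := by
    have h_level : 0 ≤ largeLevel m δ₂ + δinf := add_nonneg (largeLevel_nonneg h₂) hinf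
    refine (Finset.sum_le_card_nsmul _ _ _ fun k _ =>
      gaussMat_real_abs_mulVec_le hm hh k h_level).trans_eq ?_
    rw [Finset.card_univ, Fintype.card_fin, nsmul_eq_mul, mul_sqrt_mul_largeLevel_add hm]
  simp only [h_count]
  exact ENNReal.ofReal_le_of_le_toReal
    (one_sub_exp_neg_le_measureReal_sum_indicator_one_le hA h_indep h_mean)

variable {u g₁ g₂ : Fin n → ℝ}

lemma l0_signChange_le_four_mul_signChangeScale (hm : 0 < m) (hinf : 0 ≤ δinf)
    (hg₁ : l2 g₁ ≤ δ₂) (hg₂ : linf g₂ ≤ δinf)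
    (hu : ((Finset.univ.filter fun k => |u k| ≤ largeLevel m δ₂ + δinf).card : ℝ) ≤
      3 * signChangeScale m δ₂ δinf) :
    (l0 (signChange u (g₁ + g₂)) : ℝ) ≤ 4 * signChangeScale m δ₂ δinf := by
  have h_split : (l0 (signChange u (g₁ + g₂)) : ℝ) ≤
      (Finset.univ.filter fun k => |u k| ≤ largeLevel m δ₂ + δinf).card +
        (Finset.univ.filter fun k => largeLevel m δ₂ < |g₁ k|).card :=
    mod_cast l0_signChange_add_le (fun k => (abs_le_linf g₂ k).trans hg₂) _
  have h_large : m * δ₂ ^ ((2 : ℝ) / 3) ≤ signChangeScale m δ₂ δinf :=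
    le_add_of_nonneg_right (by positivity)
  linarith [card_largeLevel_lt_le hm hg₁]

lemma l2_signChange_mul_add_le (hinf : 0 ≤ δinf) (hg₁ : l2 g₁ ≤ δ₂) (hg₂ : linf g₂ ≤ δinf)
    (h_l0 : (l0 (signChange u (g₁ + g₂)) : ℝ) ≤ 4 * signChangeScale m δ₂ δinf) :
    l2 (fun k => signChange u (g₁ + g₂) k * (u k + (g₁ + g₂) k)) ≤
      4 * (δ₂ + δinf ^ ((3 : ℝ) / 2) * (m : ℝ) ^ ((3 : ℝ) / 4)) := by
  have h₂ : 0 ≤ δ₂ := (l2_nonneg g₁).trans hg₁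
  set x := δ₂ ^ ((2 : ℝ) / 3) with hx
  set y := δinf * √m with hy
  set b := δinf ^ ((3 : ℝ) / 2) * (m : ℝ) ^ ((3 : ℝ) / 4) with hb
  have hb_sq : b ^ 2 = y ^ 3 := by
    rw [hb, mul_pow, rpow_three_quarters_sq m.cast_nonneg, rpow_three_halves_eq_sqrt_pow hinf,
      ← pow_mul, mul_comm 3, pow_mul, Real.sq_sqrt hinf, hy, mul_pow]
  have h_young : y ^ 2 * x ≤ δ₂ ^ 2 + y ^ 3 := by
    rw [← rpow_two_thirds_pow_three h₂]
    exact sq_mul_le_pow_three_add_pow_three (by positivity) (by positivity)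
  refine abs_le_of_sq_le_sq' ?_ (by positivity) |>.2
  calc
    l2 (fun k => signChange u (g₁ + g₂) k * (u k + (g₁ + g₂) k)) ^ 2 ≤
        2 * l2 g₁ ^ 2 + 2 * δinf ^ 2 * l0 (signChange u (g₁ + g₂)) :=
      sq_l2_signChange_mul_add_le fun k => (abs_le_linf g₂ k).trans hg₂
    _ ≤ 2 * δ₂ ^ 2 + 2 * δinf ^ 2 * (4 * signChangeScale m δ₂ δinf) := by
      gcongr
      exact l2_nonneg g₁
    _ = 2 * δ₂ ^ 2 + 8 * (y ^ 2 * x) + 8 * y ^ 3 := by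
      have h_sqrt : √(m : ℝ) ^ 2 = m := Real.sq_sqrt m.cast_nonneg
      rw [signChangeScale, rpow_three_halves_eq_sqrt_pow m.cast_nonneg, hy, ← hx]
      linear_combination -8 * δinf ^ 2 * x * h_sqrt
    _ ≤ (4 * (δ₂ + b)) ^ 2 := by
      nlinarith [mul_nonneg h₂ (show 0 ≤ b by positivity), sq_nonneg δ₂]

end Scales

theorem statement12_general {m n : ℕ} (hm : 0 < m) {δ₂ δinf : ℝ} (h₂ : 0 ≤ δ₂) (hinf : 0 ≤ δinf)
    {h0 : Fin n → ℝ} (hh0 : l2 h0 = 1) :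
    ENNReal.ofReal (1 - Real.exp (-signChangeScale m δ₂ δinf)) ≤
      gaussMat m n (2 / m)
        {W | ∀ g' g1 g2 : Fin m → ℝ, g' = g1 + g2 → l2 g1 ≤ δ₂ → linf g2 ≤ δinf →
          (l0 (signChange (mulVec W h0) g') : ℝ) ≤ 4 * signChangeScale m δ₂ δinf ∧
          l0 (fun k => signChange (mulVec W h0) g' k * (mulVec W h0 k + g' k)) ≤
            l0 (signChange (mulVec W h0) g') ∧
          l2 (fun k => signChange (mulVec W h0) g' k * (mulVec W h0 k + g' k)) ≤
            4 * (δ₂ + δinf ^ ((3 : ℝ) / 2) * (m : ℝ) ^ ((3 : ℝ) / 4))} := by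
  refine (le_gaussMat_card_abs_mulVec_le hm h₂ hinf hh0).trans (measure_mono ?_)
  rintro W hW _ g1 g2 rfl hg1 hg2
  have h_l0 := l0_signChange_le_four_mul_signChangeScale hm hinf hg1 hg2 hW
  exact ⟨h_l0, l0_mul_le _ _, l2_signChange_mul_add_le hinf hg1 hg2 h_l0⟩

/-- Claim 8.3, sign changes under perturbation of a Gaussian layer. -/
theorem statement12 :
    ∃ C c : ℝ, 0 < C ∧ 0 < c ∧
      ∀ (m : ℕ), 0 < m →
      ∀ δ₂ δinf : ℝ, 0 ≤ δ₂ → δ₂ ≤ C → 0 ≤ δinf → δinf ≤ 1 / (4 * Real.sqrt m) →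
      ∀ h0 : Fin m → ℝ, l2 h0 = 1 →
        ENNReal.ofReal (1 - Real.exp (-(c * (m : ℝ) ^ ((3 : ℝ) / 2) * δinf))) ≤
          gaussMat m m (2 / m)
            {W | ∀ g' g1 g2 : Fin m → ℝ, g' = g1 + g2 → l2 g1 ≤ δ₂ → linf g2 ≤ δinf →
              (l0 (fun k => (signOf (fun k' => mulVec W h0 k' + g' k')) k -
                    signOf (mulVec W h0) k) : ℝ) ≤
                  C * ((m : ℝ) * δ₂ ^ ((2 : ℝ) / 3) + δinf * (m : ℝ) ^ ((3 : ℝ) / 2)) ∧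
              l0 (fun k => ((signOf (fun k' => mulVec W h0 k' + g' k')) k -
                      signOf (mulVec W h0) k) * (mulVec W h0 k + g' k)) ≤
                l0 (fun k => (signOf (fun k' => mulVec W h0 k' + g' k')) k -
                    signOf (mulVec W h0) k) ∧
              l2 (fun k => ((signOf (fun k' => mulVec W h0 k' + g' k')) k -
                      signOf (mulVec W h0) k) * (mulVec W h0 k + g' k)) ≤
                C * (δ₂ + δinf ^ ((3 : ℝ) / 2) * (m : ℝ) ^ ((3 : ℝ) / 4))} := by
  refine ⟨4, 1, by norm_num, one_pos, fun m hm δ₂ δinf h₂ _ hinf _ h0 hh0 =>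
    le_trans ?_ (statement12_general hm h₂ hinf hh0)⟩
  gcongr
  rw [one_mul, mul_comm]
  exact le_add_of_nonneg_left (by positivity)

end DNNPaper
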